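/- The Rogers–Ramanujan product formulas: G(q) := ∑_{n≥0} q^{n²}/(q;q)_n = 1/((q;q⁵)_∞ (q⁴;q⁵)_∞) and H(q) := ∑_{n≥0} q^{n(n+1)}/(q;q)_n = 1/((q²;q⁵)_∞ (q³;q⁵)_∞). -/

import Mathlib

/-!
For a sequence `t : ℤ → K` put `B(t; a, b) = ∑ⱼ tⱼ / ((q; q)_(a-j) (q; q)_(b+j))`. Bailey's lemma,
a consequence of the `q`-Vandermonde sum, expresses the effect on `n ↦ B(t; n, n + d)` of
multiplying `tⱼ` by `q ^ (j (j + d))`. Let `d ∈ {0, 1}`. The finite Jacobi triple product gives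
`B(t; n, n + d) = δₙ₀` for `tⱼ = (-1) ^ j * q ^ (j (j - 1) / 2)`, so one application of Bailey's
lemma gives `1 / (q; q)_n`, and a second one, with `n → ∞`, turns `∑ₙ q ^ (n (n + d)) / (q; q)_n`
into `(q; q)_∞⁻¹ ∑ⱼ (-1) ^ j * q ^ (j (j - 1) / 2 + 2 j (j + d))`. The last sum is a theta series
in `q ^ 5`, which the Jacobi triple product evaluates.
-/

open Filter Finset Function Topology

section Field

variable {K : Type*} [Field K] {q : K}

/-- The `q`-Pochhammer symbol `(a; q)_n`. -/
def qPochhammer (a q : K) (n : ℕ) : K := ∏ k ∈ range n, (1 - a * q ^ k)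

/-- The reciprocal `1 / (q; q)_m`, extended to all integers `m` by the usual convention that it
vanishes for `m < 0`. With it, sums over bounded ranges become finitely supported sums over `ℤ`. -/
def invQPochhammer (q : K) : ℤ → K
  | .ofNat n => (qPochhammer q q n)⁻¹
  | .negSucc _ => 0

/-- The term `z ^ j * q ^ (j (j - 1) / 2)` of the theta series of the Jacobi triple product. The
integer division is exact. -/
def jacobiTerm (z q : K) (j : ℤ) : K := z ^ j * q ^ (j * (j - 1) / 2)

/-- The sum `∑ⱼ tⱼ / ((q; q)_(a-j) (q; q)_(b+j))`. If `β n = baileySum q t n (n + d)`, then `(t, β)`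
is a bilateral Bailey pair relative to `q ^ d`, up to normalization. -/
noncomputable def baileySum (q : K) (t : ℤ → K) (a b : ℤ) : K :=
  ∑ᶠ j : ℤ, t j * (invQPochhammer q (a - j) * invQPochhammer q (b + j))

theorem qPochhammer_zero (a q : K) : qPochhammer a q 0 = 1 := prod_range_zero _

theorem qPochhammer_succ (a q : K) (n : ℕ) :
    qPochhammer a q (n + 1) = qPochhammer a q n * (1 - a * q ^ n) :=
  prod_range_succ _ _

theorem qPochhammer_one_succ (q : K) (n : ℕ) : qPochhammer 1 q (n + 1) = 0 :=
  prod_eq_zero (mem_range.mpr n.succ_pos) (by simp)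

theorem one_sub_pow_succ_ne_zero (hq : ¬IsOfFinOrder q) (n : ℕ) : 1 - q ^ (n + 1) ≠ 0 :=
  fun h ↦ hq (isOfFinOrder_iff_pow_eq_one.mpr ⟨n + 1, n.succ_pos, (sub_eq_zero.mp h).symm⟩)

theorem qPochhammer_self_ne_zero (hq : ¬IsOfFinOrder q) (n : ℕ) : qPochhammer q q n ≠ 0 :=
  prod_ne_zero_iff.mpr fun k _ ↦ by simpa [pow_succ'] using one_sub_pow_succ_ne_zero hq k

theorem qPochhammer_mul (a q : K) (m n : ℕ) :
    qPochhammer a q (m * n) = ∏ r ∈ range m, qPochhammer (a * q ^ r) (q ^ m) n := by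
  induction n with
  | zero => simp [qPochhammer_zero]
  | succ n ih =>
    simp_rw [qPochhammer_succ, prod_mul_distrib, ← ih]
    rw [qPochhammer, Nat.mul_succ, prod_range_add]
    congr 1
    exact prod_congr rfl fun r _ ↦ by ring

theorem invQPochhammer_natCast (q : K) (n : ℕ) : invQPochhammer q n = (qPochhammer q q n)⁻¹ := rfl

theorem invQPochhammer_zero (q : K) : invQPochhammer q 0 = 1 := by
  simpa [qPochhammer_zero] using invQPochhammer_natCast q 0

theorem invQPochhammer_of_neg (q : K) {m : ℤ} (hm : m < 0) : invQPochhammer q m = 0 := by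
  obtain ⟨n, rfl⟩ := Int.eq_negSucc_of_lt_zero hm
  rfl

theorem one_sub_zpow_mul_invQPochhammer (hq : ¬IsOfFinOrder q) (m : ℤ) :
    (1 - q ^ m) * invQPochhammer q m = invQPochhammer q (m - 1) := by
  rcases lt_or_ge m 0 with hm | hm
  · rw [invQPochhammer_of_neg q hm, invQPochhammer_of_neg q (by lia), mul_zero]
  lift m to ℕ using hm
  cases m with
  | zero => simp [invQPochhammer_of_neg]
  | succ n =>
    have := one_sub_pow_succ_ne_zero hq n
    rw [Nat.cast_succ, add_sub_cancel_right, ← Nat.cast_succ, zpow_natCast,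
      invQPochhammer_natCast, invQPochhammer_natCast, qPochhammer_succ, ← pow_succ', mul_inv]
    field_simp

theorem jacobiTerm_zero (z q : K) : jacobiTerm z q 0 = 1 := by simp [jacobiTerm]

theorem jacobiTerm_mul_jacobiTerm (z w q p : K) (j : ℤ) :
    jacobiTerm z q j * jacobiTerm w p j = jacobiTerm (z * w) (q * p) j := by
  simp only [jacobiTerm, mul_zpow]
  ring

theorem jacobiTerm_ne_zero {z : K} (hz : z ≠ 0) (hq₀ : q ≠ 0) (j : ℤ) : jacobiTerm z q j ≠ 0 :=
  mul_ne_zero (zpow_ne_zero _ hz) (zpow_ne_zero _ hq₀)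

theorem jacobiTerm_add_one {z : K} (hz : z ≠ 0) (hq₀ : q ≠ 0) (j : ℤ) :
    jacobiTerm z q (j + 1) = z * q ^ j * jacobiTerm z q j := by
  have hexp : (j + 1) * (j + 1 - 1) / 2 = j * (j - 1) / 2 + j := by
    rw [← Int.add_mul_ediv_left _ _ two_ne_zero]
    ring_nf
  rw [jacobiTerm, jacobiTerm, hexp, zpow_add₀ hq₀, zpow_add_one₀ hz]
  ring

theorem jacobiTerm_neg (z : K) (hq₀ : q ≠ 0) (j : ℤ) :
    jacobiTerm z q (-j) = jacobiTerm (q / z) q j := by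
  have hexp : -j * (-j - 1) / 2 = j * (j - 1) / 2 + j := by
    rw [← Int.add_mul_ediv_left _ _ two_ne_zero]
    ring_nf
  rw [jacobiTerm, jacobiTerm, hexp, zpow_add₀ hq₀, div_zpow, zpow_neg]
  ring

theorem zpow_mul_add_eq_jacobiTerm (hq₀ : q ≠ 0) (d j : ℤ) :
    q ^ (j * (j + d)) = jacobiTerm (q ^ (1 + d)) (q ^ 2) j := by
  rw [jacobiTerm, ← zpow_mul, ← zpow_natCast q 2, ← zpow_mul, ← zpow_add₀ hq₀, Nat.cast_ofNat,
    Int.two_mul_ediv_two_of_even (Int.even_mul_pred_self j)]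
  ring_nf

theorem hasFiniteSupport_baileySum (q : K) (t : ℤ → K) (a b : ℤ) :
    HasFiniteSupport fun j : ℤ ↦ t j * (invQPochhammer q (a - j) * invQPochhammer q (b + j)) := by
  refine (Set.finite_Icc (-b) a).subset fun j ↦ not_imp_comm.mp fun hj ↦ ?_
  rw [Set.mem_Icc, not_and_or] at hj
  rcases hj with hj | hj
  · simp [invQPochhammer_of_neg q (show b + j < 0 by lia)]
  · simp [invQPochhammer_of_neg q (show a - j < 0 by lia)]

theorem baileySum_of_add_neg (q : K) (t : ℤ → K) {a b : ℤ} (h : a + b < 0) :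
    baileySum q t a b = 0 := by
  refine finsum_eq_zero_of_forall_eq_zero fun j ↦ ?_
  rcases lt_or_ge (a - j) 0 with hj | hj
  · simp [invQPochhammer_of_neg q hj]
  · simp [invQPochhammer_of_neg q (show b + j < 0 by lia)]

theorem hasFiniteSupport_mul_baileySum_mul_invQPochhammer (q : K) (c t : ℤ → K) (N d : ℤ) :
    HasFiniteSupport fun s ↦ c s * baileySum q t s (s + d) * invQPochhammer q (N - s) := by
  refine (Set.finite_Icc (-d / 2) N).subset fun s hs ↦ ?_
  have hNs : 0 ≤ N - s := not_lt.mp fun h ↦ hs (by simp [invQPochhammer_of_neg q h])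
  have hsd : 0 ≤ s + (s + d) := not_lt.mp fun h ↦ hs (by simp [baileySum_of_add_neg q t h])
  rw [Set.mem_Icc]
  lia

theorem baileySum_zero_zero (q : K) (t : ℤ → K) : baileySum q t 0 0 = t 0 := by
  rw [baileySum, finsum_eq_single _ 0 fun j hj ↦ ?_]
  · simp [invQPochhammer_zero]
  · rcases hj.lt_or_gt with hj | hj
    · simp [invQPochhammer_of_neg q hj]
    · simp [invQPochhammer_of_neg q (show -j < 0 by lia)]

theorem baileySum_comp_neg (q : K) (t : ℤ → K) (a b : ℤ) :
    baileySum q (fun j ↦ t (-j)) a b = baileySum q t b a := by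
  rw [baileySum, baileySum, ← finsum_comp_equiv (Equiv.neg ℤ)]
  refine finsum_congr fun j ↦ ?_
  rw [Equiv.neg_apply, neg_neg, sub_neg_eq_add, ← sub_eq_add_neg, mul_comm (invQPochhammer q _)]

theorem const_mul_baileySum (q c : K) (t : ℤ → K) (a b : ℤ) :
    c * baileySum q t a b = baileySum q (fun j ↦ c * t j) a b := by
  simp only [baileySum, mul_finsum, mul_assoc]

theorem baileySum_add (q : K) (t u : ℤ → K) (a b : ℤ) :
    baileySum q (fun j ↦ t j + u j) a b = baileySum q t a b + baileySum q u a b := by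
  simp only [baileySum, add_mul]
  exact finsum_add_distrib (hasFiniteSupport_baileySum q t a b) (hasFiniteSupport_baileySum q u a b)

theorem one_sub_zpow_mul_baileySum_add_one (hq : ¬IsOfFinOrder q) (hq₀ : q ≠ 0) (t : ℤ → K)
    (a b : ℤ) :
    (1 - q ^ (a + b + 1)) * baileySum q t (a + 1) b =
      baileySum q (fun j ↦ t j + q ^ (a - j) * t (j + 1)) a b := by
  have hpascal (j : ℤ) : (1 - q ^ (a + b + 1)) * t j *
      (invQPochhammer q (a + 1 - j) * invQPochhammer q (b + j)) =
      t j * (invQPochhammer q (a - j) * invQPochhammer q (b + j)) +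
        q ^ (a + 1 - j) * t j * (invQPochhammer q (a + 1 - j) * invQPochhammer q (b - 1 + j)) := by
    have ha := one_sub_zpow_mul_invQPochhammer hq (a + 1 - j)
    have hb := one_sub_zpow_mul_invQPochhammer hq (b + j)
    rw [add_sub_right_comm, add_sub_cancel_right] at ha
    rw [add_sub_right_comm] at hb
    rw [← ha, ← hb, show a + b + 1 = (a - j + 1) + (b + j) by ring, zpow_add₀ hq₀,
      add_sub_right_comm]
    ring
  have hshift : baileySum q (fun j ↦ q ^ (a + 1 - j) * t j) (a + 1) (b - 1) =
      baileySum q (fun j ↦ q ^ (a - j) * t (j + 1)) a b := by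
    rw [baileySum, ← finsum_comp_equiv (Equiv.addRight (1 : ℤ)), baileySum]
    simp only [Equiv.coe_addRight, add_sub_add_right_eq_sub, sub_add_add_cancel]
  rw [const_mul_baileySum, baileySum_add, ← hshift]
  simp only [baileySum, hpascal]
  exact finsum_add_distrib (hasFiniteSupport_baileySum q t a b)
    (hasFiniteSupport_baileySum q (fun j ↦ q ^ (a + 1 - j) * t j) (a + 1) (b - 1))

theorem baileySum_jacobiTerm_symm (hq₀ : q ≠ 0) (z : K) (a b : ℤ) :
    baileySum q (jacobiTerm z q) a b = baileySum q (jacobiTerm (q / z) q) b a := by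
  simp_rw [← baileySum_comp_neg q (jacobiTerm z q), jacobiTerm_neg z hq₀]

theorem one_sub_zpow_mul_baileySum_jacobiTerm (hq : ¬IsOfFinOrder q) (hq₀ : q ≠ 0) {z : K}
    (hz : z ≠ 0) (a b : ℤ) :
    (1 - q ^ (a + b + 1)) * baileySum q (jacobiTerm z q) (a + 1) b =
      (1 + z * q ^ a) * baileySum q (jacobiTerm z q) a b := by
  rw [one_sub_zpow_mul_baileySum_add_one hq hq₀, const_mul_baileySum]
  congr! 2 with j
  rw [jacobiTerm_add_one hz hq₀, zpow_sub₀ hq₀]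
  have := zpow_ne_zero j hq₀
  field_simp

/-- The finite form of the Jacobi triple product. -/
theorem baileySum_jacobiTerm (hq : ¬IsOfFinOrder q) (hq₀ : q ≠ 0) {z : K} (hz : z ≠ 0) (a b : ℕ) :
    baileySum q (jacobiTerm z q) a b =
      qPochhammer (-z) q a * qPochhammer (-(q / z)) q b * invQPochhammer q (a + b) := by
  have extend {w c : K} (hw : w ≠ 0) (a b : ℕ)
      (h : baileySum q (jacobiTerm w q) 0 b = c * invQPochhammer q b) :
      baileySum q (jacobiTerm w q) a b = qPochhammer (-w) q a * c * invQPochhammer q (a + b) := by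
    induction a with
    | zero => simp [h, qPochhammer_zero]
    | succ a ih =>
      have hrec := one_sub_zpow_mul_baileySum_jacobiTerm hq hq₀ hw a b
      have hinv := one_sub_zpow_mul_invQPochhammer hq (a + b + 1)
      have hne : 1 - q ^ ((a : ℤ) + b + 1) ≠ 0 := mod_cast one_sub_pow_succ_ne_zero hq (a + b)
      rw [add_sub_cancel_right] at hinv
      refine mul_left_cancel₀ hne ?_
      rw [Nat.cast_succ, hrec, ih, qPochhammer_succ, add_right_comm (a : ℤ) 1, ← hinv, zpow_natCast]
      ring
  have hb : baileySum q (jacobiTerm z q) 0 b = qPochhammer (-(q / z)) q b * invQPochhammer q b := by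
    have := extend (c := 1) (div_ne_zero hq₀ hz) b 0
      (by simp [baileySum_zero_zero, jacobiTerm_zero, invQPochhammer_zero])
    simpa [baileySum_jacobiTerm_symm hq₀ z] using this
  exact extend hz a b hb

/-- The `q`-Chu–Vandermonde sum. -/
theorem baileySum_zpow_mul_invQPochhammer (hq : ¬IsOfFinOrder q) (hq₀ : q ≠ 0) (a c : ℤ) :
    baileySum q (fun i ↦ q ^ (i * (i + c)) * invQPochhammer q (i + c)) a 0 =
      invQPochhammer q a * invQPochhammer q (a + c) := by
  rcases lt_or_ge a 0 with ha | ha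
  · rw [baileySum_of_add_neg _ _ (by lia), invQPochhammer_of_neg q ha, zero_mul]
  lift a to ℕ using ha
  induction a generalizing c with
  | zero => simp [baileySum_zero_zero, invQPochhammer_zero]
  | succ a ih =>
    have hne : 1 - q ^ ((a : ℤ) + 1) ≠ 0 := mod_cast one_sub_pow_succ_ne_zero hq a
    have hrec := one_sub_zpow_mul_baileySum_add_one hq hq₀
      (fun i ↦ q ^ (i * (i + c)) * invQPochhammer q (i + c)) a 0
    have hexp (i : ℤ) : q ^ ((a : ℤ) - i) * (q ^ ((i + 1) * (i + 1 + c)) *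
          invQPochhammer q (i + 1 + c)) =
        q ^ (a + c + 1) * (q ^ (i * (i + (c + 1))) * invQPochhammer q (i + (c + 1))) := by
      rw [← mul_assoc, ← mul_assoc, ← zpow_add₀ hq₀, ← zpow_add₀ hq₀]
      ring_nf
    have hinv := one_sub_zpow_mul_invQPochhammer hq (a + 1)
    have hinv_add := one_sub_zpow_mul_invQPochhammer hq (a + c + 1)
    rw [add_sub_cancel_right] at hinv hinv_add
    simp_rw [add_zero, baileySum_add, hexp, ← const_mul_baileySum, ih] at hrec
    refine mul_left_cancel₀ hne ?_
    rw [Nat.cast_succ, hrec, add_right_comm (a : ℤ) 1, ← add_assoc]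
    linear_combination
      -invQPochhammer q a * hinv_add - invQPochhammer q (a + c + 1) * hinv

theorem invQPochhammer_mul_invQPochhammer_eq_finsum (hq : ¬IsOfFinOrder q) (hq₀ : q ≠ 0)
    (N d j : ℤ) :
    invQPochhammer q (N - j) * invQPochhammer q (N + d + j) =
      ∑ᶠ s : ℤ, q ^ ((s - j) * (s + d + j)) * invQPochhammer q (N - s) *
        (invQPochhammer q (s - j) * invQPochhammer q (s + d + j)) := by
  have h := baileySum_zpow_mul_invQPochhammer hq hq₀ (N - j) (2 * j + d)
  rw [show N - j + (2 * j + d) = N + d + j by ring] at h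
  rw [← h, baileySum, ← finsum_comp_equiv (Equiv.subRight j)]
  refine finsum_congr fun s ↦ ?_
  rw [Equiv.subRight_apply, show s - j + (2 * j + d) = s + d + j by ring,
    sub_sub_sub_cancel_right, zero_add]
  ring

theorem finsum_comm_of_hasFiniteSupport {α β M : Type*} [AddCommMonoid M] {f : α → β → M}
    (hf : HasFiniteSupport (uncurry f)) : ∑ᶠ (a) (b), f a b = ∑ᶠ (b) (a), f a b := by
  have hf' : HasFiniteSupport fun x : β × α ↦ f x.2 x.1 :=
    hf.comp_of_injective Prod.swap_injective
  rw [← finsum_curry _ hf', ← finsum_comp_equiv (Equiv.prodComm α β)]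
  exact (finsum_curry _ hf).symm

/-- Bailey's lemma, in the case where both of its free parameters tend to infinity. -/
theorem baileySum_zpow_mul (hq : ¬IsOfFinOrder q) (hq₀ : q ≠ 0) (t : ℤ → K) (N d : ℤ) :
    baileySum q (fun j ↦ q ^ (j * (j + d)) * t j) N (N + d) =
      ∑ᶠ s : ℤ, q ^ (s * (s + d)) * baileySum q t s (s + d) * invQPochhammer q (N - s) := by
  have hexp (j s : ℤ) : q ^ (j * (j + d)) * q ^ ((s - j) * (s + d + j)) = q ^ (s * (s + d)) := by
    rw [← zpow_add₀ hq₀]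
    ring_nf
  have hsupp : HasFiniteSupport (uncurry fun j s : ℤ ↦
      q ^ (s * (s + d)) * (t j * (invQPochhammer q (s - j) * invQPochhammer q (s + d + j))) *
        invQPochhammer q (N - s)) := by
    refine ((Set.finite_Icc (-N - d) N).prod (Set.finite_Icc (-d / 2) N)).subset ?_
    rintro ⟨j, s⟩ hjs
    have hNs : 0 ≤ N - s := not_lt.mp fun h ↦ hjs (by simp [invQPochhammer_of_neg q h])
    have hsj : 0 ≤ s - j := not_lt.mp fun h ↦ hjs (by simp [invQPochhammer_of_neg q h])
    have hsdj : 0 ≤ s + d + j := not_lt.mp fun h ↦ hjs (by simp [invQPochhammer_of_neg q h])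
    simp only [Set.mem_prod, Set.mem_Icc]
    lia
  simp only [baileySum, mul_finsum, finsum_mul]
  rw [← finsum_comm_of_hasFiniteSupport hsupp]
  refine finsum_congr fun j ↦ ?_
  rw [invQPochhammer_mul_invQPochhammer_eq_finsum hq hq₀, mul_finsum]
  refine finsum_congr fun s ↦ ?_
  rw [← hexp j s]
  ring

theorem baileySum_jacobiTerm_neg_one (hq : ¬IsOfFinOrder q) (hq₀ : q ≠ 0) {d : ℤ}
    (hd : d = 0 ∨ d = 1) (s : ℤ) :
    baileySum q (jacobiTerm (-1) q) s (s + d) = if s = 0 then 1 else 0 := by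
  rcases lt_or_ge s 0 with hs | hs
  · rw [baileySum_of_add_neg _ _ (by lia), if_neg hs.ne]
  lift d to ℕ using by lia
  lift s to ℕ using hs
  rw [← Nat.cast_add, baileySum_jacobiTerm hq hq₀ (neg_ne_zero.mpr one_ne_zero)]
  cases s with
  | zero => simp [qPochhammer_zero, invQPochhammer_natCast, div_neg, qPochhammer_self_ne_zero hq]
  | succ n => simp [qPochhammer_one_succ, Nat.cast_add_one_ne_zero]

theorem baileySum_zpow_mul_jacobiTerm_neg_one (hq : ¬IsOfFinOrder q) (hq₀ : q ≠ 0) {d : ℤ}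
    (hd : d = 0 ∨ d = 1) (s : ℤ) :
    baileySum q (fun j ↦ q ^ (j * (j + d)) * jacobiTerm (-1) q j) s (s + d) =
      invQPochhammer q s := by
  simp_rw [baileySum_zpow_mul hq hq₀, baileySum_jacobiTerm_neg_one hq hq₀ hd]
  rw [finsum_eq_single _ 0 fun r hr ↦ by simp [hr]]
  simp

end Field

section NormedField

variable {𝕜 : Type*} [NormedField 𝕜] {q : 𝕜}

/-- The infinite `q`-Pochhammer symbol `(a; q)_∞`. -/
noncomputable def qPochhammerInf (a q : 𝕜) : 𝕜 := ∏' k : ℕ, (1 - a * q ^ k)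

theorem qPochhammerInf_pow_pow (q : 𝕜) (r m : ℕ) :
    qPochhammerInf (q ^ r) (q ^ m) = ∏' k : ℕ, (1 - q ^ (m * k + r)) := by
  simp only [qPochhammerInf, ← pow_mul, ← pow_add, add_comm]

theorem not_isOfFinOrder_of_norm_lt_one (hq : ‖q‖ < 1) : ¬IsOfFinOrder q :=
  fun h ↦ hq.ne h.norm_eq_one

theorem baileySum_eq_tsum (q : 𝕜) (t : ℤ → 𝕜) (a b : ℤ) :
    baileySum q t a b = ∑' j, t j * (invQPochhammer q (a - j) * invQPochhammer q (b + j)) :=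
  (tsum_eq_finsum (hasFiniteSupport_baileySum q t a b)).symm

theorem summable_norm_neg_mul_pow (a : 𝕜) (hq : ‖q‖ < 1) : Summable fun k : ℕ ↦ ‖-(a * q ^ k)‖ := by
  simpa only [norm_neg, norm_mul] using (summable_norm_geometric_of_norm_lt_one hq).mul_left ‖a‖

theorem summable_norm_jacobiTerm {z : 𝕜} (hz : z ≠ 0) (hq₀ : q ≠ 0) (hq : ‖q‖ < 1) :
    Summable fun j ↦ ‖jacobiTerm z q j‖ := by
  have hnat {w : 𝕜} (hw : w ≠ 0) : Summable fun n : ℕ ↦ ‖jacobiTerm w q n‖ := by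
    have hratio (n : ℕ) : ‖jacobiTerm w q (n + 1)‖ / ‖jacobiTerm w q n‖ = ‖w‖ * ‖q‖ ^ n := by
      rw [jacobiTerm_add_one hw hq₀, norm_mul,
        mul_div_cancel_right₀ _ (norm_ne_zero_iff.mpr (jacobiTerm_ne_zero hw hq₀ n)), norm_mul,
        zpow_natCast, norm_pow]
    refine summable_of_ratio_test_tendsto_lt_one zero_lt_one
      (.of_forall fun n ↦ norm_ne_zero_iff.mpr (jacobiTerm_ne_zero hw hq₀ n)) ?_
    simpa [hratio] using
      (tendsto_pow_atTop_nhds_zero_of_lt_one (norm_nonneg q) hq).const_mul ‖w‖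
  refine .of_nat_of_neg (hnat hz) ?_
  simpa only [jacobiTerm_neg z hq₀] using hnat (div_ne_zero hq₀ hz)

theorem tsum_pow_div_qPochhammer_eq_tsum_zpow (q : 𝕜) (d : ℕ) :
    ∑' n : ℕ, q ^ (n * (n + d)) / qPochhammer q q n =
      ∑' s : ℤ, q ^ (s * (s + d)) * invQPochhammer q s := by
  rw [← (Nat.cast_injective (R := ℤ)).tsum_eq]
  · refine tsum_congr fun n ↦ ?_
    rw [invQPochhammer_natCast, ← div_eq_mul_inv]
    norm_cast
  · refine fun s hs ↦ ⟨s.toNat, Int.toNat_of_nonneg (not_lt.mp fun h ↦ hs ?_)⟩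
    simp [invQPochhammer_of_neg q h]

variable [CompleteSpace 𝕜]

theorem tendsto_qPochhammer (a : 𝕜) (hq : ‖q‖ < 1) :
    Tendsto (qPochhammer a q) atTop (𝓝 (qPochhammerInf a q)) := by
  have := multipliable_one_add_of_summable (summable_norm_neg_mul_pow a hq)
  simp only [← sub_eq_add_neg] at this
  exact this.tendsto_prod_tprod_nat

theorem qPochhammerInf_self_ne_zero (hq : ‖q‖ < 1) : qPochhammerInf q q ≠ 0 := by
  have h (k : ℕ) : 1 + -(q * q ^ k) ≠ 0 := by
    simpa only [← sub_eq_add_neg, ← pow_succ'] using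
      one_sub_pow_succ_ne_zero (not_isOfFinOrder_of_norm_lt_one hq) k
  simpa only [qPochhammerInf, ← sub_eq_add_neg] using
    tprod_one_add_ne_zero_of_summable h (summable_norm_neg_mul_pow q hq)

theorem qPochhammerInf_eq_prod (a : 𝕜) (hq : ‖q‖ < 1) {m : ℕ} (hm : m ≠ 0) :
    qPochhammerInf a q = ∏ r ∈ range m, qPochhammerInf (a * q ^ r) (q ^ m) := by
  have hqm : ‖q ^ m‖ < 1 := by simpa using pow_lt_one₀ (norm_nonneg q) hq hm
  have hmul : Tendsto (m * ·) atTop atTop := tendsto_id.const_mul_atTop' hm.bot_lt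
  refine tendsto_nhds_unique ((tendsto_qPochhammer a hq).comp hmul) ?_
  simpa only [comp_def, qPochhammer_mul] using
    tendsto_finsetProd _ fun r _ ↦ tendsto_qPochhammer (a * q ^ r) hqm

theorem tendsto_invQPochhammer (hq : ‖q‖ < 1) :
    Tendsto (invQPochhammer q) atTop (𝓝 (qPochhammerInf q q)⁻¹) := by
  rw [← Nat.map_cast_int_atTop, tendsto_map'_iff]
  exact (tendsto_qPochhammer q hq).inv₀ (qPochhammerInf_self_ne_zero hq)

theorem exists_norm_invQPochhammer_le (hq : ‖q‖ < 1) : ∃ C, ∀ m, ‖invQPochhammer q m‖ ≤ C := by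
  have hlim := (tendsto_invQPochhammer hq).comp tendsto_natCast_atTop_atTop
  obtain ⟨C, hC⟩ := (Metric.isBounded_range_of_tendsto _ hlim).exists_norm_le
  have hnat (n : ℕ) : ‖invQPochhammer q n‖ ≤ C := hC _ ⟨n, rfl⟩
  refine ⟨C, fun m ↦ ?_⟩
  rcases lt_or_ge m 0 with hm | hm
  · simpa [invQPochhammer_of_neg q hm] using (norm_nonneg _).trans (hnat 0)
  · lift m to ℕ using hm
    exact hnat m

theorem tendsto_baileySum {ι : Type*} {l : Filter ι} {f g : ι → ℤ} (hq : ‖q‖ < 1) {t : ℤ → 𝕜}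
    (ht : Summable fun j ↦ ‖t j‖) (hf : Tendsto f l atTop) (hg : Tendsto g l atTop) :
    Tendsto (fun i ↦ baileySum q t (f i) (g i)) l
      (𝓝 ((∑' j, t j) * ((qPochhammerInf q q)⁻¹ * (qPochhammerInf q q)⁻¹))) := by
  obtain ⟨C, hC⟩ := exists_norm_invQPochhammer_le hq
  have hC₀ : 0 ≤ C := (norm_nonneg _).trans (hC 0)
  have hE := tendsto_invQPochhammer hq
  simp_rw [baileySum_eq_tsum, ← tsum_mul_right]
  refine tendsto_tsum_of_dominated_convergence (ht.mul_right (C * C)) (fun j ↦ ?_)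
    (.of_forall fun i j ↦ ?_)
  · have hfj : Tendsto (fun i ↦ f i - j) l atTop := tendsto_atTop_add_const_right l (-j) hf
    have hgj : Tendsto (fun i ↦ g i + j) l atTop := tendsto_atTop_add_const_right l j hg
    exact ((hE.comp hfj).mul (hE.comp hgj)).const_mul (t j)
  · rw [norm_mul, norm_mul]
    gcongr <;> apply hC

/-- The Jacobi triple product. -/
theorem tsum_jacobiTerm {z : 𝕜} (hz : z ≠ 0) (hq₀ : q ≠ 0) (hq : ‖q‖ < 1) :
    ∑' j, jacobiTerm z q j =
      qPochhammerInf (-z) q * qPochhammerInf (-(q / z)) q * qPochhammerInf q q := by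
  have hcast : Tendsto (Nat.cast : ℕ → ℤ) atTop atTop := tendsto_natCast_atTop_atTop
  have hsum := tendsto_baileySum hq (summable_norm_jacobiTerm hz hq₀ hq) hcast hcast
  simp_rw [baileySum_jacobiTerm (not_isOfFinOrder_of_norm_lt_one hq) hq₀ hz] at hsum
  have hprod := ((tendsto_qPochhammer (-z) hq).mul (tendsto_qPochhammer (-(q / z)) hq)).mul
    ((tendsto_invQPochhammer hq).comp (hcast.atTop_add_atTop hcast))
  have hlim := tendsto_nhds_unique hsum hprod
  have := qPochhammerInf_self_ne_zero hq
  field_simp at hlim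
  linear_combination hlim

theorem tsum_zpow_mul_baileySum (hq₀ : q ≠ 0) (hq : ‖q‖ < 1) {t : ℤ → 𝕜} {d : ℤ}
    (ht : Summable fun j ↦ ‖q ^ (j * (j + d)) * t j‖)
    (hB : Summable fun s ↦ ‖q ^ (s * (s + d)) * baileySum q t s (s + d)‖) :
    ∑' s, q ^ (s * (s + d)) * baileySum q t s (s + d) =
      (∑' j, q ^ (j * (j + d)) * t j) / qPochhammerInf q q := by
  obtain ⟨C, hC⟩ := exists_norm_invQPochhammer_le hq
  have hleft := tendsto_baileySum hq ht tendsto_id (tendsto_atTop_add_const_right _ d tendsto_id)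
  have hright : Tendsto
      (fun N ↦ ∑' s, q ^ (s * (s + d)) * baileySum q t s (s + d) * invQPochhammer q (N - s)) atTop
      (𝓝 (∑' s, q ^ (s * (s + d)) * baileySum q t s (s + d) * (qPochhammerInf q q)⁻¹)) := by
    refine tendsto_tsum_of_dominated_convergence (hB.mul_right C) (fun s ↦ ?_)
      (.of_forall fun N s ↦ ?_)
    · exact ((tendsto_invQPochhammer hq).comp
        (tendsto_atTop_add_const_right _ (-s) tendsto_id)).const_mul _
    · rw [norm_mul]
      gcongr
      exact hC _
  have hlim := tendsto_nhds_unique hleft <| hright.congr fun N ↦ by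
    rw [id, baileySum_zpow_mul (not_isOfFinOrder_of_norm_lt_one hq) hq₀,
      tsum_eq_finsum (hasFiniteSupport_mul_baileySum_mul_invQPochhammer q _ t N d)]
  rw [tsum_mul_right] at hlim
  have := qPochhammerInf_self_ne_zero hq
  field_simp at hlim ⊢
  exact hlim.symm

theorem summable_norm_zpow_mul_invQPochhammer (hq₀ : q ≠ 0) (hq : ‖q‖ < 1) (d : ℤ) :
    Summable fun s ↦ ‖q ^ (s * (s + d)) * invQPochhammer q s‖ := by
  obtain ⟨C, hC⟩ := exists_norm_invQPochhammer_le hq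
  have hq₂ : ‖q ^ 2‖ < 1 := by simpa using pow_lt_one₀ (norm_nonneg q) hq two_ne_zero
  have hsum := summable_norm_jacobiTerm (zpow_ne_zero (1 + d) hq₀) (pow_ne_zero 2 hq₀) hq₂
  simp_rw [← zpow_mul_add_eq_jacobiTerm hq₀] at hsum
  refine .of_nonneg_of_le (fun s ↦ norm_nonneg _) (fun s ↦ ?_) (hsum.mul_right C)
  rw [norm_mul]
  gcongr
  exact hC s

theorem tsum_pow_div_qPochhammer (hq₀ : q ≠ 0) (hq : ‖q‖ < 1) {d : ℕ} (hd : d = 0 ∨ d = 1) :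
    ∑' n : ℕ, q ^ (n * (n + d)) / qPochhammer q q n =
      qPochhammerInf (q ^ (2 + 2 * d)) (q ^ 5) * qPochhammerInf (q ^ (3 - 2 * d)) (q ^ 5) *
        qPochhammerInf (q ^ 5) (q ^ 5) / qPochhammerInf q q := by
  have hq₅ : ‖q ^ 5‖ < 1 := by simpa using pow_lt_one₀ (norm_nonneg q) hq (by decide)
  have hz₀ : -q ^ (2 + 2 * d) ≠ 0 := neg_ne_zero.mpr (pow_ne_zero _ hq₀)
  have hbailey (s : ℤ) := baileySum_zpow_mul_jacobiTerm_neg_one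
    (not_isOfFinOrder_of_norm_lt_one hq) hq₀ (d := d) (mod_cast hd) s
  have htheta (j : ℤ) : q ^ (j * (j + d)) * (q ^ (j * (j + d)) * jacobiTerm (-1) q j) =
      jacobiTerm (-q ^ (2 + 2 * d)) (q ^ 5) j := by
    rw [zpow_mul_add_eq_jacobiTerm hq₀, jacobiTerm_mul_jacobiTerm, jacobiTerm_mul_jacobiTerm,
      ← Nat.cast_one (R := ℤ), ← Nat.cast_add, zpow_natCast]
    ring_nf
  have hdiv : q ^ 5 / q ^ (2 + 2 * d) = q ^ (3 - 2 * d) := by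
    rw [div_eq_iff (pow_ne_zero _ hq₀), ← pow_add]
    congr 1
    lia
  rw [tsum_pow_div_qPochhammer_eq_tsum_zpow]
  simp_rw [← hbailey]
  rw [tsum_zpow_mul_baileySum hq₀ hq]
  · simp_rw [htheta]
    rw [tsum_jacobiTerm hz₀ (pow_ne_zero 5 hq₀) hq₅, neg_neg, div_neg, neg_neg, hdiv]
  · simpa only [htheta] using summable_norm_jacobiTerm hz₀ (pow_ne_zero 5 hq₀) hq₅
  · simpa only [hbailey] using summable_norm_zpow_mul_invQPochhammer hq₀ hq d

theorem qPochhammerInf_self_eq_mul_pow_five (hq : ‖q‖ < 1) :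
    qPochhammerInf q q = qPochhammerInf (q ^ 1) (q ^ 5) * qPochhammerInf (q ^ 2) (q ^ 5) *
      qPochhammerInf (q ^ 3) (q ^ 5) * qPochhammerInf (q ^ 4) (q ^ 5) *
        qPochhammerInf (q ^ 5) (q ^ 5) := by
  simp [qPochhammerInf_eq_prod q hq (show 5 ≠ 0 by decide), prod_range_succ, ← pow_succ']

theorem rogers_ramanujan_general (hq : ‖q‖ < 1) :
    (∑' n : ℕ, q ^ (n ^ 2) / ∏ k ∈ range n, (1 - q ^ (k + 1))) =
        1 / ((∏' k : ℕ, (1 - q ^ (5 * k + 1))) * ∏' k : ℕ, (1 - q ^ (5 * k + 4))) ∧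
      (∑' n : ℕ, q ^ (n * (n + 1)) / ∏ k ∈ range n, (1 - q ^ (k + 1))) =
        1 / ((∏' k : ℕ, (1 - q ^ (5 * k + 2))) * ∏' k : ℕ, (1 - q ^ (5 * k + 3))) := by
  rcases eq_or_ne q 0 with rfl | hq₀
  · constructor <;> rw [tsum_eq_single 0 fun n hn ↦ by simp [hn]] <;> simp
  have hne := qPochhammerInf_self_ne_zero hq
  have hsplit := qPochhammerInf_self_eq_mul_pow_five hq
  have hG := tsum_pow_div_qPochhammer hq₀ hq (d := 0) (.inl rfl)
  have hH := tsum_pow_div_qPochhammer hq₀ hq (d := 1) (.inr rfl)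
  simp only [hsplit, mul_ne_zero_iff, pow_one] at hne
  obtain ⟨⟨⟨⟨h₁, h₂⟩, h₃⟩, h₄⟩, h₅⟩ := hne
  simp only [hsplit, qPochhammer, ← pow_succ', mul_zero, mul_one, add_zero, Nat.reduceAdd,
    Nat.reduceSub, Nat.sub_zero, pow_one, ← sq] at hG hH
  simp only [← qPochhammerInf_pow_pow, pow_one, hG, hH]
  constructor <;> field_simp

end NormedField

/-- The Rogers–Ramanujan identities in product form:
`G(q) = ∑_{n≥0} q^(n²)/(q;q)_n = 1/((q;q⁵)_∞ (q⁴;q⁵)_∞)` and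
`H(q) = ∑_{n≥0} q^(n(n+1))/(q;q)_n = 1/((q²;q⁵)_∞ (q³;q⁵)_∞)`. -/
theorem rogers_ramanujan (q : ℂ) (hq : ‖q‖ < 1) :
    (∑' n : ℕ, q ^ (n ^ 2) / ∏ k ∈ Finset.range n, (1 - q ^ (k + 1))) =
        1 / ((∏' k : ℕ, (1 - q ^ (5 * k + 1))) * ∏' k : ℕ, (1 - q ^ (5 * k + 4))) ∧
      (∑' n : ℕ, q ^ (n * (n + 1)) / ∏ k ∈ Finset.range n, (1 - q ^ (k + 1))) =
        1 / ((∏' k : ℕ, (1 - q ^ (5 * k + 2))) * ∏' k : ℕ, (1 - q ^ (5 * k + 3))) :=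
  rogers_ramanujan_general hq
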